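/- There exist unique ℂ-linear maps R₊, R₋ on A_C with the stated generator values and twisted Leibniz rule, and for every λ = (λ₊,λ₋) ∈ ℂ² the elements D_m := d_{m0}(λ) ⊗ g_λ (0 ≤ m ≤ p−1) satisfy the recurrences: R₊(D_m) = λ₊·D_{m−1} for 1 ≤ m ≤ p−1, R₋(D_m) = λ₋·D_{m+1} for 0 ≤ m ≤ p−2, R₊(D_0) = λ₊·D_{p−1}, and R₋(D_{p−1}) = λ₋·D_0. -/

import Mathlib

open scoped TensorProduct

noncomputable section

/-- `q = exp(2πi/p)`, a primitive `p`-th root of unity. -/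
def q (p : ℕ) : ℂ := Complex.exp (2 * Real.pi * Complex.I / p)

/-- `q^{1/2} = exp(iπ/p)`. -/
def qh (p : ℕ) : ℂ := Complex.exp (Real.pi * Complex.I / p)

/-- The balanced q-number `[k] = (q^k - q^{-k})/(q - q^{-1})`. -/
def qnum (p k : ℕ) : ℂ := (q p ^ k - (q p)⁻¹ ^ k) / (q p - (q p)⁻¹)

/-- The balanced q-factorial `[k]! = [1][2]⋯[k]`, with `[0]! = 1`. -/
def qfact (p k : ℕ) : ℂ := ∏ j ∈ Finset.range k, qnum p (j + 1)

/-- Generators `η₊, η₋, δ` of the coordinate algebra of `E(1,1|p)`. -/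
inductive Gen : Type
  | ep : Gen
  | em : Gen
  | d : Gen

open FreeAlgebra in
/-- The defining relations of `A(E(1,1|p))`: the two-sided ideal generated by
`η₋η₊ − q²η₊η₋`, `η₊δ − q²δη₊`, `η₋δ − q²δη₋`, `δ^p − 1`, `η₊^p`, `η₋^p`. -/
inductive ERel (p : ℕ) : FreeAlgebra ℂ Gen → FreeAlgebra ℂ Gen → Prop
  | commEta : ERel p (ι ℂ Gen.em * ι ℂ Gen.ep) ((q p ^ 2) • (ι ℂ Gen.ep * ι ℂ Gen.em))
  | commEpD : ERel p (ι ℂ Gen.ep * ι ℂ Gen.d) ((q p ^ 2) • (ι ℂ Gen.d * ι ℂ Gen.ep))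
  | commEmD : ERel p (ι ℂ Gen.em * ι ℂ Gen.d) ((q p ^ 2) • (ι ℂ Gen.d * ι ℂ Gen.em))
  | deltaPow : ERel p (ι ℂ Gen.d ^ p) 1
  | epPow : ERel p (ι ℂ Gen.ep ^ p) 0
  | emPow : ERel p (ι ℂ Gen.em ^ p) 0

/-- The coordinate algebra `A = A(E(1,1|p))` of the reduced quantum Poincaré group. -/
abbrev A (p : ℕ) : Type := RingQuot (ERel p)

/-- `η₊ ∈ A`. -/
def ηp (p : ℕ) : A p := RingQuot.mkAlgHom ℂ (ERel p) (FreeAlgebra.ι ℂ Gen.ep)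

/-- `η₋ ∈ A`. -/
def ηm (p : ℕ) : A p := RingQuot.mkAlgHom ℂ (ERel p) (FreeAlgebra.ι ℂ Gen.em)

/-- `δ ∈ A`. -/
def dl (p : ℕ) : A p := RingQuot.mkAlgHom ℂ (ERel p) (FreeAlgebra.ι ℂ Gen.d)

set_option synthInstance.maxHeartbeats 1000000
set_option maxHeartbeats 1000000

/-- The algebra `C^∞(ℝ², ℂ)` of smooth complex-valued functions on `ℝ²`. -/
def Cinf : Subalgebra ℂ ((ℝ × ℝ) → ℂ) where
  carrier := {f | ContDiff ℝ (⊤ : ℕ∞) f}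
  mul_mem' := fun {a b} (ha : ContDiff ℝ (⊤ : ℕ∞) a) (hb : ContDiff ℝ (⊤ : ℕ∞) b) =>
    ha.mul hb
  one_mem' := by
    change ContDiff ℝ (⊤ : ℕ∞) (fun _ => (1 : ℂ))
    exact contDiff_const
  add_mem' := fun {a b} (ha : ContDiff ℝ (⊤ : ℕ∞) a) (hb : ContDiff ℝ (⊤ : ℕ∞) b) =>
    ha.add hb
  zero_mem' := by
    change ContDiff ℝ (⊤ : ℕ∞) (fun _ => (0 : ℂ))
    exact contDiff_const
  algebraMap_mem' c := by
    change ContDiff ℝ (⊤ : ℕ∞) (fun _ => c)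
    exact contDiff_const

/-- `A_C = A ⊗ C^∞(ℝ², ℂ)`, the coordinate algebra of the quantum plane `E_q^{(1,1)}`
(without support restriction). -/
abbrev AC (p : ℕ) : Type := A p ⊗[ℂ] ↥Cinf

/-- The partial derivative `∂₊ = ∂/∂z₊` on `C^∞(ℝ², ℂ)`. -/
def dPlus (f : ↥Cinf) : ↥Cinf :=
  ⟨fun z => fderiv ℝ (f : (ℝ × ℝ) → ℂ) z (1, 0), by
    have hf : ContDiff ℝ (⊤ : ℕ∞) (f : (ℝ × ℝ) → ℂ) := f.2
    exact (hf.fderiv_right (m := (⊤ : ℕ∞)) (by simp)).clm_apply contDiff_const⟩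

/-- The partial derivative `∂₋ = ∂/∂z₋` on `C^∞(ℝ², ℂ)`. -/
def dMinus (f : ↥Cinf) : ↥Cinf :=
  ⟨fun z => fderiv ℝ (f : (ℝ × ℝ) → ℂ) z (0, 1), by
    have hf : ContDiff ℝ (⊤ : ℕ∞) (f : (ℝ × ℝ) → ℂ) := f.2
    exact (hf.fderiv_right (m := (⊤ : ℕ∞)) (by simp)).clm_apply contDiff_const⟩

/-- The smooth function `exp(i(a z₊ + b z₋))` on `ℝ²`. -/
def expAB (a b : ℂ) : ↥Cinf :=
  ⟨fun z => Complex.exp (Complex.I * (a * z.1 + b * z.2)), by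
    have h1 : ContDiff ℝ (⊤ : ℕ∞) (fun z : ℝ × ℝ => (z.1 : ℂ)) :=
      Complex.ofRealCLM.contDiff.comp contDiff_fst
    have h2 : ContDiff ℝ (⊤ : ℕ∞) (fun z : ℝ × ℝ => (z.2 : ℂ)) :=
      Complex.ofRealCLM.contDiff.comp contDiff_snd
    have h3 : ContDiff ℝ (⊤ : ℕ∞)
        (fun z : ℝ × ℝ => Complex.I * (a * (z.1 : ℂ) + b * (z.2 : ℂ))) :=
      contDiff_const.mul ((contDiff_const.mul h1).add (contDiff_const.mul h2))
    exact h3.cexp⟩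
/-- `ξ = q·η₊η₋ ∈ A`. -/
def xi (p : ℕ) : A p := q p • (ηp p * ηm p)

/-- The cut-off Hahn–Exton q-Bessel function
`𝒥_m(λ²ξ) = Σ_{k=0}^{p−1−m} (−1)^k q^{mk} (λ²)^k ([k]![k+m]!)⁻¹ ξ^k`. -/
def Jq (p : ℕ) (l2 : ℂ) (m : ℕ) : A p :=
  ∑ k ∈ Finset.range (p - m),
    ((-1 : ℂ) ^ k * q p ^ (m * k) * l2 ^ k / (qfact p k * qfact p (k + m))) • xi p ^ k

/-- The matrix element `d_{m0}(λ) = 𝒥_{p−m}(λ²ξ)(−iq^{1/2}λ₋η₋)^{p−m}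
+ (−iq^{−1/2}λ₊η₊)^m 𝒥_m(λ²ξ)`. -/
def dm0 (p : ℕ) (lp lm : ℂ) (m : ℕ) : A p :=
  Jq p (lp * lm) (p - m) * ((-Complex.I * qh p * lm) • ηm p) ^ (p - m) +
    ((-Complex.I * (qh p)⁻¹ * lp) • ηp p) ^ m * Jq p (lp * lm) m

/-!
A linear map `R` obeys the twisted Leibniz rule exactly when `X ↦ !![κ⁻¹ X, R X; 0, κ X]` is
multiplicative. Hence `R±` exist as soon as these matrices, at the generators, satisfy the defining
relations of `A_C`, and they are unique because the generators generate.

Replacing `q` by `q⁻¹` and exchanging `η₊` with `η₋` turns `R₊` into `R₋`, so only one operator has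
to be understood. Let `x`, `y` be the scaled variables of `d_{m0}(λ)` and normalise the monomials as
`q^(jk) xʲ yᵏ / ([j]! [k]!)`. Then `d_{m0}(λ)` is the sum of those with `j - k ≡ m` modulo `p` and
`0 ≤ j, k < p`. The operator lowers `j` by one; the monomials with `j = 0` are killed, but on these
the derivative of the plane wave produces `x^(p-1) / [p-1]!`, the value `j = p - 1` modulo `p`.
-/

section QNumbers

variable {K : Type*} [Field K] {t : K} {p : ℕ}

/-- The balanced q-number `[k]` at an arbitrary parameter `t`; `qnum p` is the case `t = q p`. The
free parameter lets the action of `p₋` be treated as that of `p₊` with `q` replaced by `q⁻¹`. -/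
def qNumber (t : K) (k : ℕ) : K := (t ^ k - t⁻¹ ^ k) / (t - t⁻¹)

/-- The balanced q-factorial `[k]!` at an arbitrary parameter `t`; `qfact p` is the case
`t = q p`. -/
def qFactorial (t : K) (k : ℕ) : K := ∏ j ∈ Finset.range k, qNumber t (j + 1)

theorem qNumber_zero (t : K) : qNumber t 0 = 0 := by simp [qNumber]

theorem qNumber_succ (ht : t - t⁻¹ ≠ 0) (k : ℕ) :
    qNumber t (k + 1) = t * qNumber t k + t⁻¹ ^ k := by
  rw [qNumber, qNumber, div_eq_iff ht, add_mul, mul_assoc, div_mul_cancel₀ _ ht]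
  ring

theorem qNumber_inv (t : K) (k : ℕ) : qNumber t⁻¹ k = qNumber t k := by
  rw [qNumber, qNumber, inv_inv, ← neg_sub (t ^ k), ← neg_sub t, neg_div_neg_eq]

theorem qNumber_eq_zero_of_pow_eq_one (ht : t ^ p = 1) : qNumber t p = 0 := by simp [qNumber, ht]

theorem qFactorial_zero (t : K) : qFactorial t 0 = 1 := rfl

theorem qFactorial_succ (t : K) (k : ℕ) :
    qFactorial t (k + 1) = qFactorial t k * qNumber t (k + 1) :=
  Finset.prod_range_succ _ _

theorem qFactorial_inv (t : K) (k : ℕ) : qFactorial t⁻¹ k = qFactorial t k := by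
  simp only [qFactorial, qNumber_inv]

theorem pow_sub_inv_pow_ne_zero (ht : IsPrimitiveRoot t p) (hp : Odd p) {k : ℕ} (hk : 0 < k)
    (hkp : k < p) : t ^ k - t⁻¹ ^ k ≠ 0 := by
  intro h
  have h_sq : t ^ (2 * k) = 1 := by
    rw [two_mul, pow_add]
    nth_rewrite 1 [sub_eq_zero.1 h]
    rw [← mul_pow, inv_mul_cancel₀ (ht.ne_zero hp.pos.ne'), one_pow]
  have h_dvd : p ∣ k := hp.coprime_two_right.dvd_of_dvd_mul_left (ht.dvd_of_pow_eq_one _ h_sq)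
  exact hkp.not_ge (Nat.le_of_dvd hk h_dvd)

theorem sub_inv_ne_zero (ht : IsPrimitiveRoot t p) (hp : Odd p) (hp1 : 1 < p) : t - t⁻¹ ≠ 0 := by
  simpa using pow_sub_inv_pow_ne_zero ht hp one_pos hp1

theorem qNumber_ne_zero (ht : IsPrimitiveRoot t p) (hp : Odd p) {k : ℕ} (hk : 0 < k)
    (hkp : k < p) : qNumber t k ≠ 0 :=
  div_ne_zero (pow_sub_inv_pow_ne_zero ht hp hk hkp) (sub_inv_ne_zero ht hp (by omega))

end QNumbers

section QCommuting

variable {K B : Type*} [CommSemiring K] [Semiring B] [Algebra K B] {x y : B} {s : K}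

theorem mul_pow_of_mul_eq_smul_mul (h : y * x = s • (x * y)) (j : ℕ) :
    y * x ^ j = s ^ j • (x ^ j * y) := by
  induction j with
  | zero => simp
  | succ j ih =>
    rw [pow_succ, ← mul_assoc, ih, smul_mul_assoc, mul_assoc, h, mul_smul_comm, smul_smul,
      mul_assoc, ← pow_succ]

theorem pow_mul_pow_of_mul_eq_smul_mul (h : y * x = s • (x * y)) (j k : ℕ) :
    y ^ k * x ^ j = s ^ (j * k) • (x ^ j * y ^ k) := by
  induction k with
  | zero => simp
  | succ k ih =>
    rw [pow_succ', mul_assoc, ih, mul_smul_comm, ← mul_assoc, mul_pow_of_mul_eq_smul_mul h,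
      smul_mul_assoc, smul_smul, mul_assoc, ← pow_add, mul_add, mul_one]

theorem smul_mul_pow_of_mul_eq_sq_smul_mul {t : K} (h : y * x = t ^ 2 • (x * y)) (k : ℕ) :
    (t • (x * y)) ^ k = t ^ (k * k) • (x ^ k * y ^ k) := by
  induction k with
  | zero => simp
  | succ k ih =>
    have h_swap : y ^ k * x = (t ^ 2) ^ k • (x * y ^ k) := by
      simpa using pow_mul_pow_of_mul_eq_smul_mul h 1 k
    rw [pow_succ, ih, smul_mul_assoc, mul_smul_comm, smul_smul, mul_assoc (x ^ k),
      ← mul_assoc (y ^ k), h_swap, smul_mul_assoc, mul_smul_comm, smul_smul, mul_assoc x,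
      ← pow_succ y, ← mul_assoc, ← pow_succ x]
    congr 1
    ring

end QCommuting

section QCommutingRootOfUnity

variable {K B : Type*} [Semifield K] [Semiring B] [Algebra K B] {x y : B} {s : K} {p : ℕ}

theorem pow_pred_eq_inv (hp : p ≠ 0) (hs : s ^ p = 1) : s ^ (p - 1) = s⁻¹ :=
  eq_inv_of_mul_eq_one_left ((pow_sub_one_mul hp s).trans hs)

theorem mul_eq_inv_smul_mul (hs : s ≠ 0) (h : y * x = s • (x * y)) :
    x * y = s⁻¹ • (y * x) :=
  (eq_inv_smul_iff₀ hs).2 h.symm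

theorem mul_pow_pred_of_mul_eq_smul_mul (h : y * x = s • (x * y)) (hp : p ≠ 0)
    (hs : s ^ p = 1) : y * x ^ (p - 1) = s⁻¹ • (x ^ (p - 1) * y) := by
  rw [mul_pow_of_mul_eq_smul_mul h, pow_pred_eq_inv hp hs]

theorem mul_pow_pred_of_mul_eq_smul_mul_swap (h : x * y = s • (y * x)) (hp : p ≠ 0)
    (hs : s ^ p = 1) : y * x ^ (p - 1) = s • (x ^ (p - 1) * y) := by
  have hs0 : s ≠ 0 := by rintro rfl; simp [zero_pow hp] at hs
  have h_inv : s⁻¹ ^ p = 1 := by rw [inv_pow, hs, inv_one]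
  rw [mul_pow_pred_of_mul_eq_smul_mul (mul_eq_inv_smul_mul hs0 h) hp h_inv, inv_inv]

end QCommutingRootOfUnity

section Jets

variable {K B : Type*} [CommSemiring K] [Semiring B] [Algebra K B] {σ : B ≃ₐ[K] B}

/-- The twisted Leibniz rule satisfied by the right regular action of a generator `p±` of
`U_q(e(1,1))`, with `σ` in the role of the action of `κ`. -/
def IsTwistedDerivation (σ : B ≃ₐ[K] B) (R : B →ₗ[K] B) : Prop :=
  ∀ X Y : B, R (X * Y) = R X * σ Y + σ.symm X * R Y

/-- The first-order jet with base point `x` and tangent `b`. Multiplication of jets is the twisted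
Leibniz rule, so twisted derivations `R` correspond to algebra maps `X ↦ jet σ X (R X)`. -/
def jet (σ : B ≃ₐ[K] B) (x b : B) : Matrix (Fin 2) (Fin 2) B := !![σ.symm x, b; 0, σ x]

theorem jet_one (σ : B ≃ₐ[K] B) : jet σ 1 0 = 1 := by
  simp [jet, Matrix.one_fin_two]

theorem jet_zero (σ : B ≃ₐ[K] B) : jet σ 0 0 = 0 := by
  simp [jet, ← Matrix.ext_iff]

theorem jet_add (σ : B ≃ₐ[K] B) (x b y c : B) : jet σ x b + jet σ y c = jet σ (x + y) (b + c) := by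
  simp [jet]

theorem jet_smul (σ : B ≃ₐ[K] B) (s : K) (x b : B) : s • jet σ x b = jet σ (s • x) (s • b) := by
  simp [jet]

theorem jet_mul (σ : B ≃ₐ[K] B) (x b y c : B) :
    jet σ x b * jet σ y c = jet σ (x * y) (b * σ y + σ.symm x * c) := by
  simp [jet, add_comm]

theorem exists_isTwistedDerivation_of_jet (Φ : B →ₐ[K] Matrix (Fin 2) (Fin 2) B)
    (hΦ : ∀ X, ∃ b, Φ X = jet σ X b) :
    ∃ R : B →ₗ[K] B, IsTwistedDerivation σ R ∧ ∀ {X b}, Φ X = jet σ X b → R X = b := by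
  let R : B →ₗ[K] B := Matrix.entryLinearMap K B 0 1 ∘ₗ Φ.toLinearMap
  have hR : ∀ {X b}, Φ X = jet σ X b → R X = b := fun h => congrFun₂ h 0 1
  refine ⟨R, fun X Y => ?_, hR⟩
  obtain ⟨b, hb⟩ := hΦ X
  obtain ⟨c, hc⟩ := hΦ Y
  rw [hR hb, hR hc]
  exact hR (by rw [map_mul, hb, hc, jet_mul])

end Jets

section JetHom

variable {K B C : Type*} [CommSemiring K] [Ring B] [Algebra K B] [Semiring C] [Algebra K C]

/-- The algebra map `f ↦ jet σ (i f) (δ f)` attached to a twisted derivation `δ` along `i`. -/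
def jetHom (σ : B ≃ₐ[K] B) (i : C →ₐ[K] B) (δ : C →ₗ[K] B)
    (hδ : ∀ f g, δ (f * g) = δ f * σ (i g) + σ.symm (i f) * δ g) :
    C →ₐ[K] Matrix (Fin 2) (Fin 2) B :=
  AlgHom.ofLinearMap
    { toFun := fun f => jet σ (i f) (δ f)
      map_add' := fun f g => by rw [map_add, map_add, jet_add]
      map_smul' := fun s f => by rw [map_smul, map_smul, jet_smul, RingHom.id_apply] }
    (by
      have hδ_one : δ 1 = 0 := by simpa using hδ 1 1
      simp only [LinearMap.coe_mk, AddHom.coe_mk, map_one, hδ_one, jet_one])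
    (fun f g => by
      simp only [LinearMap.coe_mk, AddHom.coe_mk, jet_mul, map_mul, hδ])

end JetHom

section ScaledJets

variable {K B : Type*} [Field K] [Ring B] [Algebra K B]
  {σ : B ≃ₐ[K] B} {R : B →ₗ[K] B} {x y : B} {t : K}

theorem symm_apply_of_apply_eq_smul (ht : t ≠ 0) (hσ : σ x = t • x) : σ.symm x = t⁻¹ • x := by
  rw [AlgEquiv.symm_apply_eq, map_smul, hσ, smul_smul, inv_mul_cancel₀ ht, one_smul]

theorem jet_smul_one_mul {r s : K} (hr : r ≠ 0) (hx : σ x = r • x) (hy : σ y = s • y)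
    (i j : K) : jet σ x (i • 1) * jet σ y (j • 1) =
      jet σ (x * y) ((i * s) • y + (j * r⁻¹) • x) := by
  rw [jet_mul, hy, symm_apply_of_apply_eq_smul hr hx, smul_mul_smul_comm, smul_mul_smul_comm,
    one_mul, mul_one, mul_comm j]

theorem jet_smul_one_pow (ht : t - t⁻¹ ≠ 0) (hσ : σ x = t • x) (c : K) (k : ℕ) :
    jet σ x (c • 1) ^ k = jet σ (x ^ k) ((c * qNumber t k) • x ^ (k - 1)) := by
  have ht0 : t ≠ 0 := by rintro rfl; simp at ht
  induction k with
  | zero => simp [qNumber_zero, jet_one]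
  | succ k ih =>
    have h_pred : qNumber t k • (x ^ (k - 1) * x) = qNumber t k • x ^ k := by
      cases k with
      | zero => simp [qNumber_zero]
      | succ k => rw [Nat.add_sub_cancel, pow_succ]
    rw [pow_succ, ih, jet_mul, map_pow, symm_apply_of_apply_eq_smul ht0 hσ, hσ, ← pow_succ,
      qNumber_succ ht, Nat.add_sub_cancel, smul_pow, smul_mul_smul_comm, mul_right_comm, mul_smul,
      h_pred, smul_mul_smul_comm, mul_one, smul_smul, ← add_smul]
    congr 2
    ring

theorem IsTwistedDerivation.map_pow (hR : IsTwistedDerivation σ R) (ht : t - t⁻¹ ≠ 0)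
    (hσ : σ x = t • x) {c : K} (hx : R x = c • 1) (k : ℕ) :
    R (x ^ k) = (c * qNumber t k) • x ^ (k - 1) := by
  have h_jet : jet σ (x ^ k) (R (x ^ k)) = jet σ x (R x) ^ k :=
    _root_.map_pow (jetHom σ (AlgHom.id K B) R hR) x k
  rw [hx, jet_smul_one_pow ht hσ] at h_jet
  exact congrFun₂ h_jet 0 1

end ScaledJets

section CyclicLowering

variable {K B : Type*} [Field K] [Ring B] [Algebra K B] {p : ℕ} {t l : K} {x y g : B}
  {σ : B ≃ₐ[K] B} {R : B →ₗ[K] B}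

/-- The q-divided power `xᵏ / [k]!`. -/
def qDividedPower (t : K) (x : B) (k : ℕ) : B := (qFactorial t k)⁻¹ • x ^ k

theorem qDividedPower_zero (t : K) (x : B) : qDividedPower t x 0 = 1 := by
  simp [qDividedPower, qFactorial_zero]

/-- The normal-ordered monomial in `x` and `y`, normalised so that the lowering operators shift an
index without producing a scalar. -/
def besselTerm (t : K) (x y : B) (j k : ℕ) : B :=
  t ^ (j * k) • (qDividedPower t x j * qDividedPower t y k)

theorem besselTerm_mul (t : K) (x y g : B) (j k : ℕ) :
    besselTerm t x y j k * g =
      (t ^ (j * k) * (qFactorial t k)⁻¹) • (qDividedPower t x j * (y ^ k * g)) := by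
  rw [besselTerm, qDividedPower.eq_def t y k]
  simp only [smul_mul_assoc, mul_smul_comm, smul_smul, mul_assoc]

theorem besselTerm_swap (ht : t ≠ 0) (hyx : y * x = t ^ 2 • (x * y)) (j k : ℕ) :
    besselTerm t x y j k = besselTerm t⁻¹ y x k j := by
  simp only [besselTerm, qDividedPower, qFactorial_inv, smul_mul_smul_comm,
    pow_mul_pow_of_mul_eq_smul_mul hyx, smul_smul]
  congr 1
  rw [← pow_mul, inv_pow]
  field_simp
  ring

/-- The sum of the `besselTerm`s whose indices differ by `m` modulo `p`; for suitable multiples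
`x`, `y` of `η₊`, `η₋` it is the matrix element `d_{m0}(λ)`. -/
def besselSum [NeZero p] (t : K) (x y : B) (m : ZMod p) : B :=
  ∑ j : ZMod p, besselTerm t x y j.val (j - m).val

theorem besselSum_swap [NeZero p] (ht : t ≠ 0) (hyx : y * x = t ^ 2 • (x * y)) (m : ZMod p) :
    besselSum t x y m = besselSum t⁻¹ y x (-m) := by
  rw [besselSum, besselSum, ← Equiv.sum_comp (Equiv.addRight m)]
  simp only [Equiv.coe_addRight, add_sub_cancel_right, sub_neg_eq_add, besselTerm_swap ht hyx]

theorem map_besselSum {C : Type*} [Ring C] [Algebra K C] [NeZero p] (φ : B →ₐ[K] C) (t : K)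
    (x y : B) (m : ZMod p) : φ (besselSum t x y m) = besselSum t (φ x) (φ y) m := by
  simp only [besselSum, besselTerm, qDividedPower, map_sum, map_smul, map_mul, map_pow]

theorem zmod_val_sub_one [NeZero p] (j : ZMod p) :
    (j - 1).val = if j.val = 0 then p - 1 else j.val - 1 := by
  obtain ⟨r, rfl⟩ := Nat.exists_eq_add_one_of_ne_zero (NeZero.ne p)
  split_ifs with hj
  · rw [(ZMod.val_eq_zero j).1 hj, zero_sub, ZMod.val_neg_one, Nat.add_sub_cancel]
  · have h_cast : j - 1 = ((j.val - 1 : ℕ) : ZMod (r + 1)) := by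
      rw [Nat.cast_pred (Nat.pos_of_ne_zero hj), ZMod.natCast_zmod_val]
    rw [h_cast, ZMod.val_natCast_of_lt (by have := j.val_lt; omega)]

theorem besselSum_natCast [NeZero p] (t : K) (x y : B) {m : ℕ} (hm : m < p) :
    besselSum t x y (m : ZMod p) =
      ∑ k ∈ Finset.range m, besselTerm t x y k (k + (p - m)) +
        ∑ k ∈ Finset.range (p - m), besselTerm t x y (k + m) k := by
  have h_range : besselSum t x y (m : ZMod p) =
      ∑ j ∈ Finset.range p, besselTerm t x y j ((j : ZMod p) - m).val :=
    Finset.sum_bij (fun j _ => j.val) (fun j _ => Finset.mem_range.2 j.val_lt)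
      (fun i _ j _ hij => ZMod.val_injective p hij)
      (fun j hj => ⟨j, Finset.mem_univ _, ZMod.val_natCast_of_lt (Finset.mem_range.1 hj)⟩)
      (fun j _ => by rw [ZMod.natCast_zmod_val])
  rw [h_range, ← Finset.sum_range_add_sum_Ico _ hm.le, Finset.sum_Ico_eq_sum_range]
  congr 1 <;> refine Finset.sum_congr rfl fun k hk => ?_ <;> have hk := Finset.mem_range.1 hk
  · have h_wrap : (k : ZMod p) - m = ((k + (p - m) : ℕ) : ZMod p) := by
      rw [Nat.cast_add, Nat.cast_sub hm.le, ZMod.natCast_self, zero_sub, sub_eq_add_neg]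
    rw [h_wrap, ZMod.val_natCast_of_lt (by omega)]
  · rw [Nat.cast_add, add_sub_cancel_left, ZMod.val_natCast_of_lt (by omega), add_comm]

/-- The common shape of the two actions: `R` sends `x` to a scalar, kills `y`, and replaces the
missing power `x⁻¹` by `x^(p - 1)` when it meets the plane wave `g`. -/
structure IsCyclicLowering (p : ℕ) (t l : K) (σ : B ≃ₐ[K] B) (R : B →ₗ[K] B) (x y g : B) :
    Prop where
  isTwistedDerivation : IsTwistedDerivation σ R
  snd_mul_fst : y * x = t ^ 2 • (x * y)
  fst_pow_eq_zero : x ^ p = 0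
  aut_fst : σ x = t • x
  aut_snd : σ y = t⁻¹ • y
  aut_wave : σ g = g
  map_fst : R x = l • 1
  map_snd : R y = 0
  map_wave : R g = l • (qDividedPower t x (p - 1) * g)

namespace IsCyclicLowering

theorem map_qDividedPower_succ (h : IsCyclicLowering p t l σ R x y g) (ht : IsPrimitiveRoot t p)
    (hp : Odd p) {j : ℕ} (hj : j + 1 < p) :
    R (qDividedPower t x (j + 1)) = l • qDividedPower t x j := by
  have h_num : qNumber t (j + 1) ≠ 0 := qNumber_ne_zero ht hp j.succ_pos hj
  rw [qDividedPower, qDividedPower, map_smul, h.isTwistedDerivation.map_pow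
    (sub_inv_ne_zero ht hp (by omega)) h.aut_fst h.map_fst, qFactorial_succ, Nat.add_sub_cancel,
    smul_smul, smul_smul]
  congr 1
  field_simp

theorem map_snd_pow_mul (h : IsCyclicLowering p t l σ R x y g) (ht : IsPrimitiveRoot t p)
    (hp : Odd p) (hp1 : 1 < p) (k : ℕ) :
    R (y ^ k * g) = (l * t⁻¹ ^ k) • (qDividedPower t x (p - 1) * (y ^ k * g)) := by
  have ht0 : t ≠ 0 := ht.ne_zero hp.pos.ne'
  have h_kill : R (y ^ k) = 0 := by
    simpa using h.isTwistedDerivation.map_pow (c := 0) (sub_inv_ne_zero ht.inv hp hp1) h.aut_snd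
      (by simpa using h.map_snd) k
  -- moving `yᵏ` past `x^(p - 1)` costs `t^(2(p - 1)k) = t^(-2k)`
  have h_move : y ^ k * x ^ (p - 1) = (t ^ 2)⁻¹ ^ k • (x ^ (p - 1) * y ^ k) := by
    have h_sq : (t ^ 2) ^ p = 1 := by rw [pow_right_comm, ht.pow_eq_one, one_pow]
    rw [pow_mul_pow_of_mul_eq_smul_mul h.snd_mul_fst, pow_mul, pow_pred_eq_inv hp.pos.ne' h_sq]
  rw [h.isTwistedDerivation, h_kill, zero_mul, zero_add, h.map_wave, map_pow,
    symm_apply_of_apply_eq_smul (inv_ne_zero ht0) h.aut_snd, inv_inv, smul_pow, qDividedPower]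
  simp only [smul_mul_assoc, mul_smul_comm, smul_smul, ← mul_assoc, h_move]
  congr 1
  simp only [inv_pow, ← pow_mul]
  field_simp
  ring

theorem map_besselTerm_zero (h : IsCyclicLowering p t l σ R x y g) (ht : IsPrimitiveRoot t p)
    (hp : Odd p) (hp1 : 1 < p) (k : ℕ) :
    R (besselTerm t x y 0 k * g) = l • (besselTerm t x y (p - 1) k * g) := by
  have h_exp : t ^ ((p - 1) * k) = t⁻¹ ^ k := by
    rw [pow_mul, pow_pred_eq_inv hp.pos.ne' ht.pow_eq_one]
  rw [besselTerm_mul, besselTerm_mul, qDividedPower_zero, one_mul, map_smul,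
    h.map_snd_pow_mul ht hp hp1, h_exp, zero_mul, pow_zero, smul_smul, smul_smul]
  congr 1
  ring

theorem map_besselTerm_succ (h : IsCyclicLowering p t l σ R x y g) (ht : IsPrimitiveRoot t p)
    (hp : Odd p) {j : ℕ} (hj : j + 1 < p) (k : ℕ) :
    R (besselTerm t x y (j + 1) k * g) = l • (besselTerm t x y j k * g) := by
  have ht0 : t ≠ 0 := ht.ne_zero hp.pos.ne'
  have h_top : x ^ (j + 1) * x ^ (p - 1) = 0 := by
    rw [← pow_add, show j + 1 + (p - 1) = p + j by omega, pow_add, h.fst_pow_eq_zero, zero_mul]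
  have h_vanish : σ.symm (qDividedPower t x (j + 1)) * R (y ^ k * g) = 0 := by
    rw [h.map_snd_pow_mul ht hp (by omega), qDividedPower, qDividedPower, map_smul, map_pow,
      symm_apply_of_apply_eq_smul ht0 h.aut_fst, smul_pow]
    simp only [smul_mul_assoc, mul_smul_comm, ← mul_assoc, h_top, zero_mul, smul_zero]
  have h_rule : R (qDividedPower t x (j + 1) * (y ^ k * g)) =
      (l * t⁻¹ ^ k) • (qDividedPower t x j * (y ^ k * g)) := by
    rw [h.isTwistedDerivation, h_vanish, add_zero, h.map_qDividedPower_succ ht hp hj, map_mul,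
      map_pow, h.aut_snd, h.aut_wave, smul_pow]
    simp only [smul_mul_assoc, mul_smul_comm, smul_smul, mul_comm l]
  rw [besselTerm_mul, besselTerm_mul, map_smul, h_rule, smul_smul, smul_smul]
  congr 1
  rw [add_mul, pow_add, one_mul, inv_pow]
  field_simp

theorem map_besselTerm [NeZero p] (h : IsCyclicLowering p t l σ R x y g)
    (ht : IsPrimitiveRoot t p) (hp : Odd p) (hp1 : 1 < p) (j : ZMod p) (k : ℕ) :
    R (besselTerm t x y j.val k * g) = l • (besselTerm t x y (j - 1).val k * g) := by
  rw [zmod_val_sub_one]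
  rcases hj : j.val with _ | i
  · exact h.map_besselTerm_zero ht hp hp1 k
  · exact h.map_besselTerm_succ ht hp (hj ▸ j.val_lt) k

theorem map_besselSum [NeZero p] (h : IsCyclicLowering p t l σ R x y g)
    (ht : IsPrimitiveRoot t p) (hp : Odd p) (hp1 : 1 < p) (m : ZMod p) :
    R (besselSum t x y m * g) = l • (besselSum t x y (m - 1) * g) := by
  rw [besselSum, besselSum, Finset.sum_mul, Finset.sum_mul, map_sum, Finset.smul_sum,
    ← Equiv.sum_comp (Equiv.subRight 1)
      fun j => l • (besselTerm t x y j.val (j - (m - 1)).val * g)]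
  refine Finset.sum_congr rfl fun j _ => ?_
  rw [h.map_besselTerm ht hp hp1, Equiv.subRight_apply, sub_sub_sub_cancel_right]

end IsCyclicLowering

end CyclicLowering

section RootOfUnity

variable {p : ℕ}

theorem isPrimitiveRoot_q (hp : p ≠ 0) : IsPrimitiveRoot (q p) p :=
  Complex.isPrimitiveRoot_exp p hp

theorem q_sq_pow (hp : p ≠ 0) : (q p ^ 2) ^ p = 1 := by
  rw [pow_right_comm, (isPrimitiveRoot_q hp).pow_eq_one, one_pow]

theorem qh_ne_zero (p : ℕ) : qh p ≠ 0 := Complex.exp_ne_zero _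

theorem qh_pow (hp : p ≠ 0) : qh p ^ p = -1 := by
  have hp_cast : (p : ℂ) ≠ 0 := Nat.cast_ne_zero.2 hp
  rw [qh, ← Complex.exp_nat_mul, mul_div_cancel₀ _ hp_cast, Complex.exp_pi_mul_I]

theorem neg_I_pow_pred (hp : Odd p) :
    (-Complex.I) ^ (p - 1) = -(-1 : ℂ) ^ ((p + 1) / 2) := by
  obtain ⟨r, rfl⟩ := hp
  have h_half : (2 * r + 1 + 1) / 2 = r + 1 := by omega
  rw [h_half, Nat.add_sub_cancel, pow_mul, neg_sq, Complex.I_sq, pow_succ]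
  ring

/-- The constant `(-1)^((p+1)/2) / [p-1]!` in the action of `p±` on functions is the one for which
differentiating the plane wave produces the top q-divided power of `-i s⁻¹ l η±`. -/
theorem wave_scalar_eq (hp : Odd p) {s : ℂ} (hs : s ^ p = -1) (l F : ℂ) :
    Complex.I * s * ((-1) ^ ((p + 1) / 2) / F) * (Complex.I * -l ^ p) =
      l * (F⁻¹ * (-Complex.I * s⁻¹ * l) ^ (p - 1)) := by
  have h_inv : s⁻¹ ^ (p - 1) = -s := by
    rw [inv_pow]
    refine inv_eq_of_mul_eq_one_left ?_
    rw [neg_mul, mul_pow_sub_one hp.pos.ne', hs, neg_neg]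
  rw [mul_pow, mul_pow, neg_I_pow_pred hp, h_inv, ← mul_pow_sub_one hp.pos.ne' l]
  linear_combination (-(s * (-1 : ℂ) ^ ((p + 1) / 2) / F * (l * l ^ (p - 1)))) * Complex.I_mul_I

end RootOfUnity

section Presentation

variable {p : ℕ} {S : Type*} [Ring S] [Algebra ℂ S] {x y d : S}

/-- The defining relations of `A(E(1,1|p))` for elements `x`, `y`, `d` of an arbitrary algebra, in
the roles of `η₊`, `η₋`, `δ`. -/
structure PoincareRelations (p : ℕ) (x y d : S) : Prop where
  minus_mul_plus : y * x = q p ^ 2 • (x * y)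
  plus_mul_delta : x * d = q p ^ 2 • (d * x)
  minus_mul_delta : y * d = q p ^ 2 • (d * y)
  delta_pow : d ^ p = 1
  plus_pow : x ^ p = 0
  minus_pow : y ^ p = 0

theorem poincareRelations_generators (p : ℕ) : PoincareRelations p (ηp p) (ηm p) (dl p) where
  minus_mul_plus := by
    simpa only [map_mul, map_smul] using! RingQuot.mkAlgHom_rel ℂ (ERel.commEta (p := p))
  plus_mul_delta := by
    simpa only [map_mul, map_smul] using! RingQuot.mkAlgHom_rel ℂ (ERel.commEpD (p := p))
  minus_mul_delta := by
    simpa only [map_mul, map_smul] using! RingQuot.mkAlgHom_rel ℂ (ERel.commEmD (p := p))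
  delta_pow := by
    simpa only [map_pow, map_one] using! RingQuot.mkAlgHom_rel ℂ (ERel.deltaPow (p := p))
  plus_pow := by
    simpa only [map_pow, map_zero] using! RingQuot.mkAlgHom_rel ℂ (ERel.epPow (p := p))
  minus_pow := by
    simpa only [map_pow, map_zero] using! RingQuot.mkAlgHom_rel ℂ (ERel.emPow (p := p))

theorem PoincareRelations.map {T : Type*} [Ring T] [Algebra ℂ T] (h : PoincareRelations p x y d)
    (φ : S →ₐ[ℂ] T) : PoincareRelations p (φ x) (φ y) (φ d) where
  minus_mul_plus := by simp only [← map_mul, ← map_smul, h.minus_mul_plus]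
  plus_mul_delta := by simp only [← map_mul, ← map_smul, h.plus_mul_delta]
  minus_mul_delta := by simp only [← map_mul, ← map_smul, h.minus_mul_delta]
  delta_pow := by rw [← map_pow, h.delta_pow, map_one]
  plus_pow := by rw [← map_pow, h.plus_pow, map_zero]
  minus_pow := by rw [← map_pow, h.minus_pow, map_zero]

theorem PoincareRelations.exists_algHom (h : PoincareRelations p x y d) :
    ∃ φ : A p →ₐ[ℂ] S, φ (ηp p) = x ∧ φ (ηm p) = y ∧ φ (dl p) = d := by
  let f : FreeAlgebra ℂ Gen →ₐ[ℂ] S := FreeAlgebra.lift ℂ (Gen.rec x y d)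
  have hx : f (FreeAlgebra.ι ℂ Gen.ep) = x := FreeAlgebra.lift_ι_apply _ _
  have hy : f (FreeAlgebra.ι ℂ Gen.em) = y := FreeAlgebra.lift_ι_apply _ _
  have hd : f (FreeAlgebra.ι ℂ Gen.d) = d := FreeAlgebra.lift_ι_apply _ _
  have hf : ∀ ⦃a b⦄, ERel p a b → f a = f b := by
    intro a b hab
    cases hab <;> simp only [map_mul, map_smul, map_pow, map_one, map_zero, hx, hy, hd,
      h.minus_mul_plus, h.plus_mul_delta, h.minus_mul_delta, h.delta_pow, h.plus_pow, h.minus_pow]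
  have h_lift := RingQuot.liftAlgHom_mkAlgHom_apply ℂ f hf
  exact ⟨RingQuot.liftAlgHom ℂ ⟨f, hf⟩, (h_lift _).trans hx, (h_lift _).trans hy,
    (h_lift _).trans hd⟩

theorem PoincareRelations.map_jet (h : PoincareRelations p x y d) (hp : Odd p) (hp1 : 1 < p)
    {σ : S ≃ₐ[ℂ] S} (hx : σ x = q p • x) (hy : σ y = (q p)⁻¹ • y) (hd : σ d = q p • d)
    (u v : ℂ) :
    PoincareRelations p (jet σ x (u • 1)) (jet σ y (v • 1)) (jet σ d ((0 : ℂ) • 1)) := by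
  have hq := isPrimitiveRoot_q hp.pos.ne'
  have hq0 : q p ≠ 0 := hq.ne_zero hp.pos.ne'
  have h_comm {a b : S} {r s i j : ℂ} (hr : r ≠ 0) (hs : s ≠ 0) (ha : σ a = r • a)
      (hb : σ b = s • b) (hab : b * a = q p ^ 2 • (a * b)) (hi : i * s⁻¹ = q p ^ 2 * (i * s))
      (hj : j * r = q p ^ 2 * (j * r⁻¹)) :
      jet σ b (j • 1) * jet σ a (i • 1) =
        q p ^ 2 • (jet σ a (i • 1) * jet σ b (j • 1)) := by
    rw [jet_smul_one_mul hs hb ha, jet_smul_one_mul hr ha hb, jet_smul, hab, smul_add, smul_smul,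
      smul_smul, hi, hj, add_comm]
  have h_pow {a : S} {r : ℂ} (hr : IsPrimitiveRoot r p) (ha : σ a = r • a) (i : ℂ) :
      jet σ a (i • 1) ^ p = jet σ (a ^ p) 0 := by
    rw [jet_smul_one_pow (sub_inv_ne_zero hr hp hp1) ha,
      qNumber_eq_zero_of_pow_eq_one hr.pow_eq_one, mul_zero, zero_smul]
  exact
    { minus_mul_plus := h_comm hq0 (inv_ne_zero hq0) hx hy h.minus_mul_plus
        (by field_simp) (by field_simp)
      plus_mul_delta := h_comm hq0 hq0 hd hx h.plus_mul_delta (by simp) (by field_simp)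
      minus_mul_delta := h_comm hq0 (inv_ne_zero hq0) hd hy h.minus_mul_delta
        (by simp) (by field_simp)
      delta_pow := by rw [h_pow hq hd, h.delta_pow, jet_one]
      plus_pow := by rw [h_pow hq hx, h.plus_pow, jet_zero]
      minus_pow := by rw [h_pow hq.inv hy, h.minus_pow, jet_zero] }

theorem A_induction {P : A p → Prop} (algebraMap : ∀ r : ℂ, P (algebraMap ℂ (A p) r))
    (add : ∀ a b, P a → P b → P (a + b)) (mul : ∀ a b, P a → P b → P (a * b))
    (ηp : P (ηp p)) (ηm : P (ηm p)) (dl : P (dl p)) (a : A p) : P a := by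
  obtain ⟨a, rfl⟩ := RingQuot.mkAlgHom_surjective ℂ (ERel p) a
  induction a using FreeAlgebra.induction with
  | grade0 r =>
    rw [AlgHom.commutes]
    exact algebraMap r
  | grade1 i => cases i <;> assumption
  | mul a b ha hb =>
    rw [map_mul]
    exact mul _ _ ha hb
  | add a b ha hb =>
    rw [map_add]
    exact add _ _ ha hb

end Presentation

section TensorProduct

variable {p : ℕ} {C : Type*} [CommRing C] [Algebra ℂ C]

theorem A_tensor_induction {P : A p ⊗[ℂ] C → Prop} (add : ∀ X Y, P X → P Y → P (X + Y))
    (mul : ∀ X Y, P X → P Y → P (X * Y)) (ηp : P (ηp p ⊗ₜ 1)) (ηm : P (ηm p ⊗ₜ 1))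
    (dl : P (dl p ⊗ₜ 1)) (one_tmul : ∀ f : C, P (1 ⊗ₜ f)) (X : A p ⊗[ℂ] C) : P X := by
  have h_left (a : A p) : P (a ⊗ₜ 1) := by
    induction a using A_induction with
    | algebraMap r =>
      rw [Algebra.algebraMap_eq_smul_one, TensorProduct.smul_tmul]
      exact one_tmul _
    | add a b ha hb =>
      rw [TensorProduct.add_tmul]
      exact add _ _ ha hb
    | mul a b ha hb =>
      rw [← mul_one (1 : C), ← Algebra.TensorProduct.tmul_mul_tmul]
      exact mul _ _ ha hb
    | ηp => exact ηp
    | ηm => exact ηm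
    | dl => exact dl
  induction X using TensorProduct.induction_on with
  | zero => simpa only [TensorProduct.tmul_zero] using one_tmul 0
  | tmul a f =>
    rw [← mul_one a, ← one_mul f, ← Algebra.TensorProduct.tmul_mul_tmul]
    exact mul _ _ (h_left a) (one_tmul f)
  | add X Y hX hY => exact add _ _ hX hY

variable {σ : A p ⊗[ℂ] C ≃ₐ[ℂ] A p ⊗[ℂ] C} {D : Derivation ℂ C C}
  {R : A p ⊗[ℂ] C →ₗ[ℂ] A p ⊗[ℂ] C}

theorem IsTwistedDerivation.ext_generators {R' : A p ⊗[ℂ] C →ₗ[ℂ] A p ⊗[ℂ] C}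
    (hR : IsTwistedDerivation σ R) (hR' : IsTwistedDerivation σ R')
    (h_plus : R (ηp p ⊗ₜ 1) = R' (ηp p ⊗ₜ 1)) (h_minus : R (ηm p ⊗ₜ 1) = R' (ηm p ⊗ₜ 1))
    (h_delta : R (dl p ⊗ₜ 1) = R' (dl p ⊗ₜ 1)) (h_fun : ∀ f : C, R (1 ⊗ₜ f) = R' (1 ⊗ₜ f)) :
    R = R' := by
  refine LinearMap.ext fun X => ?_
  induction X using A_tensor_induction with
  | add X Y hX hY => rw [map_add, map_add, hX, hY]
  | mul X Y hX hY => rw [hR, hR', hX, hY]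
  | ηp => exact h_plus
  | ηm => exact h_minus
  | dl => exact h_delta
  | one_tmul f => exact h_fun f

/-- The right regular action `R_κ` of the group-like generator `κ`, with an arbitrary commutative
algebra `C` in place of `C^∞(ℝ², ℂ)`. -/
structure IsKappaAction (σ : A p ⊗[ℂ] C ≃ₐ[ℂ] A p ⊗[ℂ] C) : Prop where
  map_plus : σ (ηp p ⊗ₜ 1) = q p • (ηp p ⊗ₜ 1)
  map_minus : σ (ηm p ⊗ₜ 1) = (q p)⁻¹ • (ηm p ⊗ₜ 1)
  map_delta : σ (dl p ⊗ₜ 1) = q p • (dl p ⊗ₜ 1)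
  map_one_tmul : ∀ f : C, σ (1 ⊗ₜ f) = 1 ⊗ₜ f

namespace IsKappaAction

theorem symm_one_tmul (hσ : IsKappaAction σ) (f : C) : σ.symm (1 ⊗ₜ f) = 1 ⊗ₜ f := by
  rw [AlgEquiv.symm_apply_eq, hσ.map_one_tmul]

theorem commute_jet (hσ : IsKappaAction σ) {a w : A p} {t : ℂ} (ht : t ≠ 0)
    (ha : σ (a ⊗ₜ 1) = t • (a ⊗ₜ 1)) (haw : a * w = t ^ 2 • (w * a)) (u : ℂ) (f g : C) :
    Commute (jet σ (a ⊗ₜ 1) (u • 1)) (jet σ (1 ⊗ₜ f) (w ⊗ₜ g)) := by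
  have h_scalar : t⁻¹ * t ^ 2 = t := by field_simp
  rw [Commute, SemiconjBy, jet_mul, jet_mul, hσ.map_one_tmul, hσ.symm_one_tmul, ha,
    symm_apply_of_apply_eq_smul (B := A p ⊗[ℂ] C) ht ha]
  simp only [smul_mul_assoc, mul_smul_comm, one_mul, mul_one, Algebra.TensorProduct.tmul_mul_tmul,
    haw, TensorProduct.smul_tmul', smul_smul]
  rw [h_scalar, add_comm]

/-- The jets of the functions `f`, with tangent `w ⊗ D f`. -/
def functionJet (hσ : IsKappaAction σ) (w : A p) (D : Derivation ℂ C C) :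
    C →ₐ[ℂ] Matrix (Fin 2) (Fin 2) (A p ⊗[ℂ] C) :=
  jetHom (K := ℂ) (B := A p ⊗[ℂ] C) σ Algebra.TensorProduct.includeRight
    (TensorProduct.mk ℂ (A p) C w ∘ₗ D.toLinearMap) fun f g => by
      simp [hσ.map_one_tmul, hσ.symm_one_tmul, TensorProduct.tmul_add, mul_comm, add_comm]

theorem exists_algHom_jet (hσ : IsKappaAction σ) (hp : Odd p) (hp1 : 1 < p)
    (D : Derivation ℂ C C) {w : A p} (hw_plus : ηp p * w = q p ^ 2 • (w * ηp p))
    (hw_minus : ηm p * w = (q p)⁻¹ ^ 2 • (w * ηm p)) (hw_delta : dl p * w = q p ^ 2 • (w * dl p))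
    (u v : ℂ) :
    ∃ Φ : A p ⊗[ℂ] C →ₐ[ℂ] Matrix (Fin 2) (Fin 2) (A p ⊗[ℂ] C),
      Φ (ηp p ⊗ₜ 1) = jet σ (ηp p ⊗ₜ 1) (u • 1) ∧ Φ (ηm p ⊗ₜ 1) = jet σ (ηm p ⊗ₜ 1) (v • 1) ∧
      Φ (dl p ⊗ₜ 1) = jet σ (dl p ⊗ₜ 1) ((0 : ℂ) • 1) ∧
      ∀ f : C, Φ (1 ⊗ₜ f) = jet σ (1 ⊗ₜ f) (w ⊗ₜ D f) := by
  have hq0 : q p ≠ 0 := (isPrimitiveRoot_q hp.pos.ne').ne_zero hp.pos.ne'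
  obtain ⟨φ, hφ_plus, hφ_minus, hφ_delta⟩ := (((poincareRelations_generators p).map
    Algebra.TensorProduct.includeLeft).map_jet hp hp1 hσ.map_plus hσ.map_minus hσ.map_delta
    u v).exists_algHom
  have h_comm (a : A p) (f : C) : Commute (φ a) (hσ.functionJet w D f) := by
    induction a using A_induction with
    | algebraMap r => rw [AlgHom.commutes]; exact Algebra.commutes r _
    | add a b ha hb => rw [map_add]; exact ha.add_left hb
    | mul a b ha hb => rw [map_mul]; exact ha.mul_left hb
    | ηp => rw [hφ_plus]; exact hσ.commute_jet hq0 hσ.map_plus hw_plus u f (D f)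
    | ηm => rw [hφ_minus]; exact hσ.commute_jet (inv_ne_zero hq0) hσ.map_minus hw_minus v f (D f)
    | dl => rw [hφ_delta]; exact hσ.commute_jet hq0 hσ.map_delta hw_delta 0 f (D f)
  have h_left (a : A p) : Algebra.TensorProduct.lift φ (hσ.functionJet w D) h_comm (a ⊗ₜ 1) = φ a :=
    by simp
  refine ⟨Algebra.TensorProduct.lift φ (hσ.functionJet w D) h_comm, (h_left _).trans hφ_plus,
    (h_left _).trans hφ_minus, (h_left _).trans hφ_delta, fun f => ?_⟩
  rw [Algebra.TensorProduct.lift_tmul, map_one, one_mul]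
  rfl

theorem existsUnique_isTwistedDerivation (hσ : IsKappaAction σ) (hp : Odd p) (hp1 : 1 < p)
    (D : Derivation ℂ C C) {w : A p} (hw_plus : ηp p * w = q p ^ 2 • (w * ηp p))
    (hw_minus : ηm p * w = (q p)⁻¹ ^ 2 • (w * ηm p)) (hw_delta : dl p * w = q p ^ 2 • (w * dl p))
    (u v : ℂ) :
    ∃! R : A p ⊗[ℂ] C →ₗ[ℂ] A p ⊗[ℂ] C,
      R (ηp p ⊗ₜ 1) = u • 1 ∧ R (ηm p ⊗ₜ 1) = v • 1 ∧ R (dl p ⊗ₜ 1) = 0 ∧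
      (∀ f : C, R (1 ⊗ₜ f) = w ⊗ₜ D f) ∧ IsTwistedDerivation σ R := by
  obtain ⟨Φ, hΦ_plus, hΦ_minus, hΦ_delta, hΦ_fun⟩ :=
    hσ.exists_algHom_jet hp hp1 D hw_plus hw_minus hw_delta u v
  have h_jet (X : A p ⊗[ℂ] C) : ∃ b, Φ X = jet σ X b := by
    induction X using A_tensor_induction with
    | add X Y hX hY =>
      obtain ⟨⟨b, hb⟩, c, hc⟩ := hX, hY
      exact ⟨b + c, by rw [map_add, hb, hc, jet_add]⟩
    | mul X Y hX hY =>
      obtain ⟨⟨b, hb⟩, c, hc⟩ := hX, hY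
      exact ⟨_, by rw [map_mul, hb, hc, jet_mul]⟩
    | ηp => exact ⟨_, hΦ_plus⟩
    | ηm => exact ⟨_, hΦ_minus⟩
    | dl => exact ⟨_, hΦ_delta⟩
    | one_tmul f => exact ⟨_, hΦ_fun f⟩
  obtain ⟨R, hR, hR_eq⟩ := exists_isTwistedDerivation_of_jet Φ h_jet
  refine ⟨R, ⟨hR_eq hΦ_plus, hR_eq hΦ_minus, by rw [hR_eq hΦ_delta, zero_smul],
    fun f => hR_eq (hΦ_fun f), hR⟩, ?_⟩
  rintro R' ⟨h_plus, h_minus, h_delta, h_fun, hR'⟩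
  refine hR'.ext_generators hR (h_plus.trans (hR_eq hΦ_plus).symm)
    (h_minus.trans (hR_eq hΦ_minus).symm) ?_ fun f => (h_fun f).trans (hR_eq (hΦ_fun f)).symm
  rw [h_delta, hR_eq hΦ_delta, zero_smul]

end IsKappaAction

/-- The right regular action of `p₊` or `p₋`: the defining properties of `R₊` for
`(s, x, y) = (qh p, ηp p, ηm p)` and of `R₋` for `(s, x, y) = ((qh p)⁻¹, ηm p, ηp p)`, when `D` is
the corresponding partial derivative. -/
def IsRightAction (σ : A p ⊗[ℂ] C ≃ₐ[ℂ] A p ⊗[ℂ] C) (s : ℂ) (x y : A p) (D : Derivation ℂ C C)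
    (R : A p ⊗[ℂ] C →ₗ[ℂ] A p ⊗[ℂ] C) : Prop :=
  R (x ⊗ₜ 1) = (Complex.I * s) • 1 ∧ R (y ⊗ₜ 1) = 0 ∧ R (dl p ⊗ₜ 1) = 0 ∧
    (∀ f : C, R (1 ⊗ₜ f) =
      (Complex.I * s * ((-1) ^ ((p + 1) / 2) / qfact p (p - 1))) • ((x ^ (p - 1)) ⊗ₜ D f)) ∧
    IsTwistedDerivation σ R

theorem existsUnique_isRightAction_plus (hσ : IsKappaAction σ) (hp : Odd p) (hp1 : 1 < p)
    (D : Derivation ℂ C C) : ∃! R, IsRightAction σ (qh p) (ηp p) (ηm p) D R := by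
  have hp0 := hp.pos.ne'
  have h_rel := poincareRelations_generators p
  have h_plus : ηp p * ηp p ^ (p - 1) = q p ^ 2 • (ηp p ^ (p - 1) * ηp p) := by
    rw [mul_pow_sub_one hp0, pow_sub_one_mul hp0, h_rel.plus_pow, smul_zero]
  have h_minus : ηm p * ηp p ^ (p - 1) = (q p)⁻¹ ^ 2 • (ηp p ^ (p - 1) * ηm p) := by
    rw [inv_pow, mul_pow_pred_of_mul_eq_smul_mul h_rel.minus_mul_plus hp0 (q_sq_pow hp0)]
  have h_delta : dl p * ηp p ^ (p - 1) = q p ^ 2 • (ηp p ^ (p - 1) * dl p) :=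
    mul_pow_pred_of_mul_eq_smul_mul_swap h_rel.plus_mul_delta hp0 (q_sq_pow hp0)
  refine (existsUnique_congr fun R => ?_).1 (hσ.existsUnique_isTwistedDerivation hp hp1
    ((Complex.I * qh p * ((-1) ^ ((p + 1) / 2) / qfact p (p - 1))) • D) h_plus h_minus h_delta
    (Complex.I * qh p) 0)
  simp only [IsRightAction, zero_smul, Derivation.smul_apply, TensorProduct.tmul_smul]

theorem existsUnique_isRightAction_minus (hσ : IsKappaAction σ) (hp : Odd p) (hp1 : 1 < p)
    (D : Derivation ℂ C C) : ∃! R, IsRightAction σ (qh p)⁻¹ (ηm p) (ηp p) D R := by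
  have hp0 := hp.pos.ne'
  have h_rel := poincareRelations_generators p
  have h_plus : ηp p * ηm p ^ (p - 1) = q p ^ 2 • (ηm p ^ (p - 1) * ηp p) :=
    mul_pow_pred_of_mul_eq_smul_mul_swap h_rel.minus_mul_plus hp0 (q_sq_pow hp0)
  have h_minus : ηm p * ηm p ^ (p - 1) = (q p)⁻¹ ^ 2 • (ηm p ^ (p - 1) * ηm p) := by
    rw [mul_pow_sub_one hp0, pow_sub_one_mul hp0, h_rel.minus_pow, smul_zero]
  have h_delta : dl p * ηm p ^ (p - 1) = q p ^ 2 • (ηm p ^ (p - 1) * dl p) :=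
    mul_pow_pred_of_mul_eq_smul_mul_swap h_rel.minus_mul_delta hp0 (q_sq_pow hp0)
  refine (existsUnique_congr fun R => ?_).1 (hσ.existsUnique_isTwistedDerivation hp hp1
    ((Complex.I * (qh p)⁻¹ * ((-1) ^ ((p + 1) / 2) / qfact p (p - 1))) • D) h_plus h_minus h_delta
    0 (Complex.I * (qh p)⁻¹))
  rw [and_left_comm]
  simp only [IsRightAction, zero_smul, Derivation.smul_apply, TensorProduct.tmul_smul]

theorem IsRightAction.isCyclicLowering {s t l : ℂ} {x y : A p} {g : C}
    (hR : IsRightAction σ s x y D R) (hσ : IsKappaAction σ) (hp : Odd p) (hs : s ^ p = -1)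
    (ht : qFactorial t (p - 1) = qfact p (p - 1)) (hyx : y * x = t ^ 2 • (x * y))
    (hx_pow : x ^ p = 0) (hx : σ (x ⊗ₜ 1) = t • (x ⊗ₜ 1)) (hy : σ (y ⊗ₜ 1) = t⁻¹ • (y ⊗ₜ 1))
    (hg : D g = (Complex.I * -l ^ p) • g) (c : ℂ) :
    IsCyclicLowering (K := ℂ) (B := A p ⊗[ℂ] C) p t l σ R (((-Complex.I * s⁻¹ * l) • x) ⊗ₜ 1)
      ((c • y) ⊗ₜ 1) (1 ⊗ₜ g) := by
  obtain ⟨hR_fst, hR_snd, -, hR_fun, hR⟩ := hR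
  have hs0 : s ≠ 0 := by rintro rfl; simp [zero_pow hp.pos.ne'] at hs
  exact
    { isTwistedDerivation := hR
      snd_mul_fst := by
        rw [Algebra.TensorProduct.tmul_mul_tmul, Algebra.TensorProduct.tmul_mul_tmul,
          smul_mul_smul_comm, smul_mul_smul_comm, hyx, TensorProduct.smul_tmul', smul_comm,
          mul_comm c]
      fst_pow_eq_zero := by
        rw [Algebra.TensorProduct.tmul_pow, smul_pow, hx_pow, smul_zero, TensorProduct.zero_tmul]
      aut_fst := by rw [← TensorProduct.smul_tmul', map_smul, hx, smul_comm]
      aut_snd := by rw [← TensorProduct.smul_tmul', map_smul, hy, smul_comm]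
      aut_wave := hσ.map_one_tmul g
      map_fst := by
        rw [← TensorProduct.smul_tmul', map_smul, hR_fst, smul_smul]
        congr 1
        field_simp
        rw [Complex.I_sq, neg_one_mul, neg_neg]
      map_snd := by rw [← TensorProduct.smul_tmul', map_smul, hR_snd, smul_zero]
      map_wave := by
        rw [hR_fun, hg, TensorProduct.tmul_smul, smul_smul, wave_scalar_eq hp hs, mul_smul,
          mul_smul, qDividedPower, ht, Algebra.TensorProduct.tmul_pow, smul_pow, smul_mul_assoc,
          Algebra.TensorProduct.tmul_mul_tmul, one_pow, mul_one, one_mul,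
          TensorProduct.smul_tmul'] }

end TensorProduct

section MatrixElements

variable {p : ℕ}

/-- The variable `-i q^{-1/2} λ₊ η₊` of the matrix elements `d_{m0}(λ)`. -/
def scaledPlus (p : ℕ) (lp : ℂ) : A p := (-Complex.I * (qh p)⁻¹ * lp) • ηp p

/-- The variable `-i q^{1/2} λ₋ η₋` of the matrix elements `d_{m0}(λ)`. -/
def scaledMinus (p : ℕ) (lm : ℂ) : A p := (-Complex.I * qh p * lm) • ηm p

theorem scaledMinus_mul_scaledPlus (lp lm : ℂ) :
    scaledMinus p lm * scaledPlus p lp = q p ^ 2 • (scaledPlus p lp * scaledMinus p lm) := by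
  rw [scaledMinus, scaledPlus, smul_mul_smul_comm, smul_mul_smul_comm,
    (poincareRelations_generators p).minus_mul_plus, smul_comm, mul_comm (-Complex.I * qh p * lm)]

theorem neg_smul_xi_pow (lp lm : ℂ) (k : ℕ) :
    ((-1) ^ k * (lp * lm) ^ k) • xi p ^ k =
      q p ^ (k * k) • (scaledPlus p lp ^ k * scaledMinus p lm ^ k) := by
  rw [← smul_mul_pow_of_mul_eq_sq_smul_mul (scaledMinus_mul_scaledPlus lp lm), ← mul_pow,
    ← smul_pow, xi, scaledPlus, scaledMinus, smul_mul_smul_comm, smul_comm]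
  congr 3
  have h0 := qh_ne_zero p
  field_simp
  rw [Complex.I_sq]
  ring

theorem Jq_eq_sum (lp lm : ℂ) (m : ℕ) :
    Jq p (lp * lm) m = ∑ k ∈ Finset.range (p - m),
      (q p ^ ((k + m) * k) * (qfact p (k + m))⁻¹ * (qfact p k)⁻¹) •
        (scaledPlus p lp ^ k * scaledMinus p lm ^ k) := by
  refine Finset.sum_congr rfl fun k _ => ?_
  have h_scalar : q p ^ ((k + m) * k) * (qfact p (k + m))⁻¹ * (qfact p k)⁻¹ =
      q p ^ (m * k) * (qfact p (k + m))⁻¹ * (qfact p k)⁻¹ * q p ^ (k * k) := by ring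
  rw [h_scalar, mul_smul, ← neg_smul_xi_pow, smul_smul]
  congr 1
  rw [div_eq_mul_inv, mul_inv]
  ring

theorem pow_mul_Jq (lp lm : ℂ) (m : ℕ) :
    scaledPlus p lp ^ m * Jq p (lp * lm) m = ∑ k ∈ Finset.range (p - m),
      besselTerm (q p) (scaledPlus p lp) (scaledMinus p lm) (k + m) k := by
  rw [Jq_eq_sum, Finset.mul_sum]
  refine Finset.sum_congr rfl fun k _ => ?_
  rw [mul_smul_comm, ← mul_assoc, ← pow_add, add_comm m, besselTerm, qDividedPower, qDividedPower,
    smul_mul_smul_comm, smul_smul, ← mul_assoc]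
  rfl

theorem Jq_mul_pow (lp lm : ℂ) (m : ℕ) :
    Jq p (lp * lm) m * scaledMinus p lm ^ m = ∑ k ∈ Finset.range (p - m),
      besselTerm (q p) (scaledPlus p lp) (scaledMinus p lm) k (k + m) := by
  rw [Jq_eq_sum, Finset.sum_mul]
  refine Finset.sum_congr rfl fun k _ => ?_
  rw [smul_mul_assoc, mul_assoc (scaledPlus p lp ^ k), ← pow_add, besselTerm, qDividedPower,
    qDividedPower, smul_mul_smul_comm, smul_smul, mul_comm (k + m), mul_right_comm, mul_assoc]
  rfl

variable [NeZero p] {C : Type*} [CommRing C] [Algebra ℂ C]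
  {σ : A p ⊗[ℂ] C ≃ₐ[ℂ] A p ⊗[ℂ] C} {D : Derivation ℂ C C}
  {R : A p ⊗[ℂ] C →ₗ[ℂ] A p ⊗[ℂ] C}

theorem dm0_val_eq_besselSum (lp lm : ℂ) (m : ZMod p) :
    dm0 p lp lm m.val = besselSum (q p) (scaledPlus p lp) (scaledMinus p lm) m := by
  have h_left := Jq_mul_pow (p := p) lp lm (p - m.val)
  rw [Nat.sub_sub_self m.val_le] at h_left
  conv_rhs => rw [← ZMod.natCast_zmod_val m, besselSum_natCast _ _ _ m.val_lt]
  exact congrArg₂ (· + ·) h_left (pow_mul_Jq lp lm m.val)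

theorem dm0_val_tmul (lp lm : ℂ) (m : ZMod p) (g : C) :
    dm0 p lp lm m.val ⊗ₜ[ℂ] g =
      besselSum (q p) (scaledPlus p lp ⊗ₜ 1) (scaledMinus p lm ⊗ₜ 1) m * (1 ⊗ₜ g) := by
  rw [dm0_val_eq_besselSum, ← Algebra.TensorProduct.includeLeft_apply (S := ℂ),
    ← Algebra.TensorProduct.includeLeft_apply (S := ℂ), ← map_besselSum,
    Algebra.TensorProduct.includeLeft_apply, Algebra.TensorProduct.tmul_mul_tmul, mul_one, one_mul]

theorem IsRightAction.map_dm0_plus (hR : IsRightAction σ (qh p) (ηp p) (ηm p) D R)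
    (hσ : IsKappaAction σ) (hp : Odd p) (hp1 : 1 < p) {lp : ℂ} (lm : ℂ) {g : C}
    (hg : D g = (Complex.I * -lp ^ p) • g) (m : ZMod p) :
    R (dm0 p lp lm m.val ⊗ₜ g) = lp • (dm0 p lp lm (m - 1).val ⊗ₜ g) := by
  have hp0 := hp.pos.ne'
  have h_rel := poincareRelations_generators p
  rw [dm0_val_tmul, dm0_val_tmul]
  exact (hR.isCyclicLowering hσ hp (qh_pow hp0) rfl h_rel.minus_mul_plus h_rel.plus_pow
    hσ.map_plus hσ.map_minus hg _).map_besselSum (isPrimitiveRoot_q hp0) hp hp1 m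

theorem IsRightAction.map_dm0_minus (hR : IsRightAction σ (qh p)⁻¹ (ηm p) (ηp p) D R)
    (hσ : IsKappaAction σ) (hp : Odd p) (hp1 : 1 < p) (lp : ℂ) {lm : ℂ} {g : C}
    (hg : D g = (Complex.I * -lm ^ p) • g) (m : ZMod p) :
    R (dm0 p lp lm m.val ⊗ₜ g) = lm • (dm0 p lp lm (m + 1).val ⊗ₜ g) := by
  have hp0 := hp.pos.ne'
  have hq := isPrimitiveRoot_q hp0
  have hq0 : q p ≠ 0 := hq.ne_zero hp0
  have h_rel := poincareRelations_generators p
  have h_swap (m : ZMod p) : besselSum (q p) (scaledPlus p lp ⊗ₜ[ℂ] (1 : C))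
      (scaledMinus p lm ⊗ₜ 1) m =
      besselSum (q p)⁻¹ (scaledMinus p lm ⊗ₜ 1) (scaledPlus p lp ⊗ₜ 1) (-m) := by
    refine besselSum_swap hq0 ?_ m
    simp only [Algebra.TensorProduct.tmul_mul_tmul, scaledMinus_mul_scaledPlus,
      TensorProduct.smul_tmul']
  have h_lower : IsCyclicLowering (K := ℂ) (B := A p ⊗[ℂ] C) p (q p)⁻¹ lm σ R
      (scaledMinus p lm ⊗ₜ 1) (scaledPlus p lp ⊗ₜ 1) (1 ⊗ₜ g) := by
    have h := hR.isCyclicLowering hσ hp (s := (qh p)⁻¹) (t := (q p)⁻¹)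
      (by rw [inv_pow, qh_pow hp0, inv_neg, inv_one]) (qFactorial_inv _ _)
      (by rw [inv_pow, mul_eq_inv_smul_mul (pow_ne_zero 2 hq0) h_rel.minus_mul_plus])
      h_rel.minus_pow hσ.map_minus (by rw [inv_inv, hσ.map_plus]) hg
      (-Complex.I * (qh p)⁻¹ * lp)
    rwa [inv_inv] at h
  rw [dm0_val_tmul, dm0_val_tmul, h_swap, h_swap, h_lower.map_besselSum hq.inv hp hp1, neg_add']

end MatrixElements

section PlaneWaves

theorem Cinf_differentiable (f : ↥Cinf) : Differentiable ℝ (f : ℝ × ℝ → ℂ) :=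
  have hf : ContDiff ℝ (⊤ : ℕ∞) (f : ℝ × ℝ → ℂ) := f.2
  hf.differentiable (by simp)

/-- The directional derivative along `v` as a derivation of `C^∞(ℝ², ℂ)`; `dPlus` and `dMinus` are
the cases `v = (1, 0)` and `v = (0, 1)`. -/
def directionalDerivation (v : ℝ × ℝ) : Derivation ℂ ↥Cinf ↥Cinf :=
  Derivation.mk'
    { toFun := fun f => ⟨fun z => fderiv ℝ (f : ℝ × ℝ → ℂ) z v, by
        have hf : ContDiff ℝ (⊤ : ℕ∞) (f : ℝ × ℝ → ℂ) := f.2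
        exact (hf.fderiv_right (m := (⊤ : ℕ∞)) (by simp)).clm_apply contDiff_const⟩
      map_add' := fun f g => Subtype.ext <| funext fun z =>
        DFunLike.congr_fun (fderiv_add (Cinf_differentiable f z) (Cinf_differentiable g z)) v
      map_smul' := fun c f => Subtype.ext <| funext fun z =>
        DFunLike.congr_fun (fderiv_const_smul (Cinf_differentiable f z) c) v }
    fun f g => Subtype.ext <| funext fun z =>
      DFunLike.congr_fun (fderiv_mul (Cinf_differentiable f z) (Cinf_differentiable g z)) v

theorem hasFDerivAt_expAB (a b : ℂ) (z : ℝ × ℝ) :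
    HasFDerivAt (expAB a b : ℝ × ℝ → ℂ)
      ((expAB a b : ℝ × ℝ → ℂ) z • (Complex.I •
        (a • Complex.ofRealCLM.comp (ContinuousLinearMap.fst ℝ ℝ ℝ) +
          b • Complex.ofRealCLM.comp (ContinuousLinearMap.snd ℝ ℝ ℝ)))) z := by
  have h_fst : HasFDerivAt (fun z : ℝ × ℝ => (z.1 : ℂ))
      (Complex.ofRealCLM.comp (ContinuousLinearMap.fst ℝ ℝ ℝ)) z :=
    (Complex.ofRealCLM.comp (ContinuousLinearMap.fst ℝ ℝ ℝ)).hasFDerivAt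
  have h_snd : HasFDerivAt (fun z : ℝ × ℝ => (z.2 : ℂ))
      (Complex.ofRealCLM.comp (ContinuousLinearMap.snd ℝ ℝ ℝ)) z :=
    (Complex.ofRealCLM.comp (ContinuousLinearMap.snd ℝ ℝ ℝ)).hasFDerivAt
  exact (((h_fst.const_mul a).add (h_snd.const_mul b)).const_mul Complex.I).cexp

theorem directionalDerivation_expAB (v : ℝ × ℝ) (a b : ℂ) :
    directionalDerivation v (expAB a b) =
      (Complex.I * (a * v.1 + b * v.2)) • expAB a b := by
  ext z
  change fderiv ℝ (expAB a b : ℝ × ℝ → ℂ) z v = _ * (expAB a b : ℝ × ℝ → ℂ) z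
  rw [(hasFDerivAt_expAB a b z).fderiv]
  exact mul_comm _ _

end PlaneWaves

/-- Existence and uniqueness of the right regular action `R₊, R₋` of the generators
`p₊, p₋` of `U_q(e(1,1))` on `A_C`, and the angular-momentum recurrences satisfied by
the matrix elements `D_m = d_{m0}(λ)⊗g_λ`. -/
theorem statement12 (p : ℕ) (hp : Odd p) (hp3 : 3 ≤ p)
    (RK : AC p ≃ₐ[ℂ] AC p)
    (hK1 : RK (ηp p ⊗ₜ[ℂ] (1 : ↥Cinf)) = q p • (ηp p ⊗ₜ[ℂ] (1 : ↥Cinf)))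
    (hK2 : RK (ηm p ⊗ₜ[ℂ] (1 : ↥Cinf)) = (q p)⁻¹ • (ηm p ⊗ₜ[ℂ] (1 : ↥Cinf)))
    (hK3 : RK (dl p ⊗ₜ[ℂ] (1 : ↥Cinf)) = q p • (dl p ⊗ₜ[ℂ] (1 : ↥Cinf)))
    (hK4 : ∀ f : ↥Cinf, RK ((1 : A p) ⊗ₜ[ℂ] f) = (1 : A p) ⊗ₜ[ℂ] f) :
    (∃! Rp : AC p →ₗ[ℂ] AC p,
      Rp (ηp p ⊗ₜ[ℂ] (1 : ↥Cinf)) = (Complex.I * qh p) • (1 : AC p) ∧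
      Rp (ηm p ⊗ₜ[ℂ] (1 : ↥Cinf)) = 0 ∧
      Rp (dl p ⊗ₜ[ℂ] (1 : ↥Cinf)) = 0 ∧
      (∀ f : ↥Cinf, Rp ((1 : A p) ⊗ₜ[ℂ] f) =
        (Complex.I * qh p * ((-1 : ℂ) ^ ((p + 1) / 2) / qfact p (p - 1))) •
          ((ηp p ^ (p - 1)) ⊗ₜ[ℂ] dPlus f)) ∧
      (∀ X Y : AC p, Rp (X * Y) = Rp X * RK Y + RK.symm X * Rp Y)) ∧
    (∃! Rm : AC p →ₗ[ℂ] AC p,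
      Rm (ηm p ⊗ₜ[ℂ] (1 : ↥Cinf)) = (Complex.I * (qh p)⁻¹) • (1 : AC p) ∧
      Rm (ηp p ⊗ₜ[ℂ] (1 : ↥Cinf)) = 0 ∧
      Rm (dl p ⊗ₜ[ℂ] (1 : ↥Cinf)) = 0 ∧
      (∀ f : ↥Cinf, Rm ((1 : A p) ⊗ₜ[ℂ] f) =
        (Complex.I * (qh p)⁻¹ * ((-1 : ℂ) ^ ((p + 1) / 2) / qfact p (p - 1))) •
          ((ηm p ^ (p - 1)) ⊗ₜ[ℂ] dMinus f)) ∧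
      (∀ X Y : AC p, Rm (X * Y) = Rm X * RK Y + RK.symm X * Rm Y)) ∧
    (∀ Rp Rm : AC p →ₗ[ℂ] AC p,
      (Rp (ηp p ⊗ₜ[ℂ] (1 : ↥Cinf)) = (Complex.I * qh p) • (1 : AC p) ∧
       Rp (ηm p ⊗ₜ[ℂ] (1 : ↥Cinf)) = 0 ∧
       Rp (dl p ⊗ₜ[ℂ] (1 : ↥Cinf)) = 0 ∧
       (∀ f : ↥Cinf, Rp ((1 : A p) ⊗ₜ[ℂ] f) =
         (Complex.I * qh p * ((-1 : ℂ) ^ ((p + 1) / 2) / qfact p (p - 1))) •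
           ((ηp p ^ (p - 1)) ⊗ₜ[ℂ] dPlus f)) ∧
       (∀ X Y : AC p, Rp (X * Y) = Rp X * RK Y + RK.symm X * Rp Y)) →
      (Rm (ηm p ⊗ₜ[ℂ] (1 : ↥Cinf)) = (Complex.I * (qh p)⁻¹) • (1 : AC p) ∧
       Rm (ηp p ⊗ₜ[ℂ] (1 : ↥Cinf)) = 0 ∧
       Rm (dl p ⊗ₜ[ℂ] (1 : ↥Cinf)) = 0 ∧
       (∀ f : ↥Cinf, Rm ((1 : A p) ⊗ₜ[ℂ] f) =
         (Complex.I * (qh p)⁻¹ * ((-1 : ℂ) ^ ((p + 1) / 2) / qfact p (p - 1))) •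
           ((ηm p ^ (p - 1)) ⊗ₜ[ℂ] dMinus f)) ∧
       (∀ X Y : AC p, Rm (X * Y) = Rm X * RK Y + RK.symm X * Rm Y)) →
      ∀ lp lm : ℂ,
        (∀ m : ℕ, 1 ≤ m → m ≤ p - 1 →
          Rp (dm0 p lp lm m ⊗ₜ[ℂ] expAB (-(lp ^ p)) (-(lm ^ p))) =
            lp • (dm0 p lp lm (m - 1) ⊗ₜ[ℂ] expAB (-(lp ^ p)) (-(lm ^ p)))) ∧
        (∀ m : ℕ, m ≤ p - 2 →
          Rm (dm0 p lp lm m ⊗ₜ[ℂ] expAB (-(lp ^ p)) (-(lm ^ p))) =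
            lm • (dm0 p lp lm (m + 1) ⊗ₜ[ℂ] expAB (-(lp ^ p)) (-(lm ^ p)))) ∧
        Rp (dm0 p lp lm 0 ⊗ₜ[ℂ] expAB (-(lp ^ p)) (-(lm ^ p))) =
          lp • (dm0 p lp lm (p - 1) ⊗ₜ[ℂ] expAB (-(lp ^ p)) (-(lm ^ p))) ∧
        Rm (dm0 p lp lm (p - 1) ⊗ₜ[ℂ] expAB (-(lp ^ p)) (-(lm ^ p))) =
          lm • (dm0 p lp lm 0 ⊗ₜ[ℂ] expAB (-(lp ^ p)) (-(lm ^ p)))) := by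
  have : NeZero p := ⟨by omega⟩
  have hp1 : 1 < p := by omega
  have hκ : IsKappaAction RK := ⟨hK1, hK2, hK3, hK4⟩
  refine ⟨existsUnique_isRightAction_plus hκ hp hp1 (directionalDerivation (1, 0)),
    existsUnique_isRightAction_minus hκ hp hp1 (directionalDerivation (0, 1)),
    fun Rp Rm hRp hRm lp lm => ?_⟩
  have h_plus := IsRightAction.map_dm0_plus (D := directionalDerivation (1, 0)) hRp hκ hp hp1 lm
    (by simpa using directionalDerivation_expAB (1, 0) (-(lp ^ p)) (-(lm ^ p)))
  have h_minus := IsRightAction.map_dm0_minus (D := directionalDerivation (0, 1)) hRm hκ hp hp1 lp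
    (by simpa using directionalDerivation_expAB (0, 1) (-(lp ^ p)) (-(lm ^ p)))
  have h_val {m : ℕ} (hm : m < p) : (m : ZMod p).val = m := ZMod.val_natCast_of_lt hm
  have h_last : (-1 : ZMod p).val = p - 1 := by simpa using zmod_val_sub_one (0 : ZMod p)
  refine ⟨fun m hm1 hmp => ?_, fun m hm => ?_, ?_, ?_⟩
  · simpa only [← Nat.cast_pred hm1, h_val (show m < p by omega),
      h_val (show m - 1 < p by omega)] using h_plus m
  · simpa only [← Nat.cast_succ, h_val (show m < p by omega),
      h_val (show m + 1 < p by omega)] using h_minus m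
  · simpa only [zero_sub, ZMod.val_zero, h_last] using h_plus 0
  · simpa only [neg_add_cancel, ZMod.val_zero, h_last] using h_minus (-1)
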